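/- Let A be a directed-complete generalized ultrametric semilattice with distance set P, let F : A → A be strictly contracting, and let x ∈ A be a fixed point of F (F(x) = x). Then x is the least upper bound in (A, ⊑) of the set {a ∈ A : a ⊑ F(a)} of all post-fixed points of F. -/

import Mathlib

/-- A generalized ultrametric semilattice over a meet-semilattice `A`
(with induced order `a ⊑ b ↔ a ⊓ b = a`, i.e. the `≤` of `SemilatticeInf`)
and a pointed partially ordered distance set `P` with least element `⊥`. -/
structure GUSemilattice (A : Type*) (P : Type*) [SemilatticeInf A] [PartialOrder P] [OrderBot P] where
  d : A → A → P
  d_eq_bot_iff : ∀ a₁ a₂ : A, d a₁ a₂ = ⊥ ↔ a₁ = a₂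
  d_symm : ∀ a₁ a₂ : A, d a₁ a₂ = d a₂ a₁
  d_ultra : ∀ (a₁ a₂ a₃ : A) (p : P), d a₁ a₂ ≤ p → d a₂ a₃ ≤ p → d a₁ a₃ ≤ p
  inf_le_inf_of_d_le : ∀ a₁ a₂ a₃ : A, d a₁ a₂ ≤ d a₁ a₃ → a₁ ⊓ a₃ ≤ a₁ ⊓ a₂
  d_inf_inf_le : ∀ a₁ a₂ a₃ : A, d (a₁ ⊓ a₂) (a₁ ⊓ a₃) ≤ d a₂ a₃

variable {A P : Type*} [SemilatticeInf A] [PartialOrder P] [OrderBot P]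

/-- `F` is contracting. -/
def GUSemilattice.Contracting (S : GUSemilattice A P) (F : A → A) : Prop :=
  ∀ a₁ a₂ : A, S.d (F a₁) (F a₂) ≤ S.d a₁ a₂

/-- `F` is strictly contracting. -/
def GUSemilattice.StrictlyContracting (S : GUSemilattice A P) (F : A → A) : Prop :=
  ∀ a₁ a₂ : A, a₁ ≠ a₂ → S.d (F a₁) (F a₂) < S.d a₁ a₂

/-- `F` is strictly contracting on orbits. -/
def GUSemilattice.StrictlyContractingOnOrbits (S : GUSemilattice A P) (F : A → A) : Prop :=
  ∀ a : A, a ≠ F a → S.d (F a) (F (F a)) < S.d a (F a)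

/-- A ball in the generalized ultrametric space associated with `S`. -/
def GUSemilattice.IsBall (S : GUSemilattice A P) (B : Set A) : Prop :=
  ∃ (a : A) (p : P), B = {x : A | S.d x a ≤ p}

/-- Spherical completeness: every nonempty chain of balls has nonempty intersection. -/
def GUSemilattice.SphericallyComplete (S : GUSemilattice A P) : Prop :=
  ∀ C : Set (Set A), C.Nonempty → IsChain (· ⊆ ·) C → (∀ B ∈ C, S.IsBall B) → (⋂₀ C).Nonempty

/-- Directed-completeness: every nonempty directed subset has a least upper bound. -/
def DirectedComplete (A : Type*) [Preorder A] : Prop :=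
  ∀ D : Set A, D.Nonempty → DirectedOn (· ≤ ·) D → ∃ s : A, IsLUB D s

theorem fixedPoint_isLUB_postFixed_points
    (S : GUSemilattice A P) (hdc : DirectedComplete A)
    (F : A → A) (hF : S.StrictlyContracting F)
    (x : A) (hx : F x = x) :
    IsLUB {a : A | a ≤ F a} x := by
  have hc : ∀ u v : A, S.d (F u) (F v) ≤ S.d u v := by
    intro u v
    by_cases h : u = v
    · subst h
      rw [(S.d_eq_bot_iff (F u) (F u)).2 rfl]
      exact bot_le
    · exact (hF u v h).le
  -- a least upper bound of post-fixed points is post-fixed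
  have hlub : ∀ (D : Set A) (s : A), (∀ c ∈ D, c ≤ F c) → IsLUB D s → s ≤ F s := by
    intro D s hD hs
    refine hs.2 ?_
    intro c hcD
    have hcs : c ≤ s := hs.1 hcD
    have h1 : S.d c (c ⊓ F s) ≤ S.d s c := by
      have h := S.d_inf_inf_le c (F c) (F s)
      rw [inf_eq_left.2 (hD c hcD)] at h
      rw [S.d_symm s c]
      exact h.trans (hc c s)
    have h2 := S.inf_le_inf_of_d_le s (c ⊓ F s) c (S.d_ultra s c _ _ le_rfl h1)
    rw [inf_eq_right.2 hcs] at h2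
    exact (h2.trans inf_le_right).trans inf_le_right
  refine ⟨?_, fun u hu => hu (by simp [hx])⟩
  intro a ha
  obtain ⟨b, hab, hb⟩ := zorn_le_nonempty₀ {a : A | a ≤ F a} (by
    intro C hC hch y hy
    obtain ⟨s, hs⟩ := hdc C ⟨y, hy⟩ hch.directedOn
    exact ⟨s, hlub C s (fun c h => hC h) hs, fun z hz => hs.1 hz⟩) a ha
  have hbF : b ≤ F b := hb.prop
  have h1 : S.d (F b) (F b ⊓ F (F b)) ≤ S.d (F b) (F (F b)) := by
    have h := S.d_inf_inf_le (F b) (F b) (F (F b))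
    rwa [inf_idem] at h
  -- `F b ⊓ F (F b)` is above `b`
  have h2 : b ≤ F b ⊓ F (F b) := by
    have h := S.inf_le_inf_of_d_le (F b) (F (F b)) b
      (by rw [S.d_symm (F b) b]; exact hc b (F b))
    rwa [inf_eq_right.2 hbF] at h
  -- and post-fixed
  have h3 : F b ⊓ F (F b) ≤ F (F b ⊓ F (F b)) := by
    have h := S.inf_le_inf_of_d_le (F (F b)) (F (F b ⊓ F (F b))) (F b)
      (by rw [S.d_symm (F (F b)) (F b)]; exact (hc _ _).trans h1)
    exact (inf_comm (F b) (F (F b))).le.trans (h.trans inf_le_right)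
  have h4 : F b ⊓ F (F b) = b := le_antisymm (hb.le_of_ge h3 h2) h2
  have h5 : b = F b := by
    by_contra hne
    rw [h4, S.d_symm] at h1
    exact absurd (hF b (F b) hne) (not_lt_of_ge h1)
  have h6 : b = x := by
    by_contra hne
    have h := hF b x hne
    rw [← h5, hx] at h
    exact lt_irrefl _ h
  exact h6 ▸ hab
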